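/- Let $d\ge 1$ and let $\mathbb{R}_{\max}=\mathbb{R}\cup\{-\infty\}$. For $A\in\mathbb{R}_{\max}^{d\times d}$ and $v\in\mathbb{R}_{\max}^{d}$ let $A\otimes v\in\mathbb{R}_{\max}^d$ be the max-plus product, $(A\otimes v)_i=\max_j(A_{ij}+v_j)$, and let $0$ also denote the zero vector. Let $(A(n))_{n\in\mathbb{Z}}$ be a stationary and ergodic sequence of random $d\times d$ matrices with entries in $\mathbb{R}_{\max}$, almost surely having at least one finite entry on each row, such that $A(0)\otimes 0$ is integrable, that is, each coordinate $\max_j A_{ij}(0)$ is integrable. For $n\ge 1$ set $$x(n,0):=A(n-1)\otimes\cdots\otimes A(0)\otimes 0,\qquad y(n,0):=A(-1)\otimes\cdots\otimes A(-n)\otimes 0.$$ Then there exist two real numbers $\gamma(A)$ and $\gamma_b(A)$ such that almost surely $$\lim_n \frac1n\max_i x_i(n,0)=\lim_n\frac1n\max_i y_i(n,0)=\gamma(A)$$ and $$\lim_n \frac1n\min_i x_i(n,0)=\lim_n\frac1n\min_i y_i(n,0)=\gamma_b(A).$$ -/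

import Mathlib

open Filter MeasureTheory Topology

noncomputable section

namespace MaxPlus

/-- `ℝ_max = ℝ ∪ {-∞}`: here `⊔` is the max-plus addition and `+` the max-plus
multiplication (with `⊥ = -∞` absorbing for `+`). -/
abbrev RMax : Type := WithBot ℝ

/-- The inclusion of `ℝ ∪ {-∞}` in the extended reals `ℝ ∪ {-∞, +∞}`. -/
def RMax.toEReal : RMax → EReal
  | ⊥ => ⊥
  | (r : ℝ) => (r : EReal)

/-- The Borel σ-algebra of `ℝ ∪ {-∞}`, as a subset of the extended reals. -/
instance RMax.instMeasurableSpace : MeasurableSpace RMax :=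
  MeasurableSpace.comap RMax.toEReal inferInstance

/-- `d × d` matrices over `ℝ_max`, with the product σ-algebra. -/
abbrev Mat (d : ℕ) : Type := Fin d → Fin d → RMax

/-- `(A ⊗ v)_i = max_j (A_{ij} + v_j)`. -/
def mulVec {d : ℕ} (A : Mat d) (v : Fin d → RMax) : Fin d → RMax :=
  fun i => Finset.univ.sup fun j => A i j + v j

/-- `prodZero A m n = A(m+n-1) ⊗ ⋯ ⊗ A(m+1) ⊗ A(m) ⊗ 0`, a product of `n` matrices applied to
the zero vector. -/
def prodZero {d : ℕ} (A : ℤ → Mat d) (m : ℤ) : ℕ → Fin d → RMax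
  | 0 => fun _ => 0
  | n + 1 => mulVec (A (m + n)) (prodZero A m n)

/-- `x(n,0) = A(n-1) ⊗ ⋯ ⊗ A(0) ⊗ 0`. -/
def x {d : ℕ} (A : ℤ → Mat d) (n : ℕ) : Fin d → RMax := prodZero A 0 n

/-- `y(n,0) = A(-1) ⊗ ⋯ ⊗ A(-n) ⊗ 0`. -/
def y {d : ℕ} (A : ℤ → Mat d) (n : ℕ) : Fin d → RMax := prodZero A (-n) n

/-- `max_i v_i`. -/
def maxCoord {d : ℕ} [NeZero d] (v : Fin d → RMax) : RMax :=
  Finset.univ.sup' Finset.univ_nonempty v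

/-- `min_i v_i`. -/
def minCoord {d : ℕ} [NeZero d] (v : Fin d → RMax) : RMax :=
  Finset.univ.inf' Finset.univ_nonempty v

/-- `a / n`, as an extended real. -/
def avg (n : ℕ) (a : RMax) : EReal := ((1 / (n : ℝ) : ℝ) : EReal) * a.toEReal

/-- An `ℝ_max`-valued random variable is integrable if it is almost surely equal to an
integrable real random variable (in particular it is almost surely finite). -/
def IntegrableRMax {Ω : Type*} [MeasurableSpace Ω] (X : Ω → RMax) (μ : Measure Ω) : Prop :=
  ∃ f : Ω → ℝ, Integrable f μ ∧ ∀ᵐ ω ∂μ, X ω = (f ω : RMax)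

/-- The shift on two-sided sequences. -/
def shift {S : Type*} (s : ℤ → S) : ℤ → S := fun n => s (n + 1)

/-- The two-sided sequence `(X(n))_{n ∈ ℤ}` is stationary and ergodic: the shift preserves its
law on the path space `S^ℤ`, and shift-invariant measurable sets of paths have probability
`0` or `1` (`Ergodic` contains both properties). -/
def StationaryErgodic {Ω S : Type*} [MeasurableSpace Ω] [MeasurableSpace S]
    (X : ℤ → Ω → S) (μ : Measure Ω) : Prop :=
  Ergodic (shift : (ℤ → S) → ℤ → S) (μ.map fun ω n => X n ω)

end MaxPlus

end

/-!
The maximum `max_i x_i(n,0)` is a subadditive cocycle over the shift and the minimum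
`min_i x_i(n,0)` a superadditive one. Since the minimum is at most the maximum, each is bounded by
the Birkhoff sums of the other's first term, so both are integrable and have finite mean growth
rates, and Kingman's ergodic theorem applies. The lower half of Kingman's theorem is the
Katznelson–Weiss covering argument: almost every orbit on which the cocycle is unbounded below can
be cut into blocks with nonpositive value and single steps of small total mean. Applied to additive
cocycles it gives Birkhoff's theorem, which in turn gives the upper half by averaging over the
phases of a cut into blocks of fixed length. Finally, `y(n,0)` is `x(n,0)` read from the path
shifted back `n` times, which makes its extremal coordinates cocycles over the inverse shift with
the same mean growth rates.
-/

section Ergodic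

variable {α : Type*} {T : α → α} {g : ℕ → α → ℝ}

/-- Subadditive cocycles over `T`, the sequences of functions of Kingman's theorem. -/
structure IsSubadditiveCocycle (T : α → α) (g : ℕ → α → ℝ) : Prop where
  apply_zero : ∀ x, g 0 x = 0
  apply_add_le : ∀ m n x, g (m + n) x ≤ g m x + g n (T^[m] x)

theorem isSubadditiveCocycle_birkhoffSum (T : α → α) (f : α → ℝ) :
    IsSubadditiveCocycle T (birkhoffSum T f) where
  apply_zero := birkhoffSum_zero T f
  apply_add_le m n x := (birkhoffSum_add T f m n x).le

theorem isSubadditiveCocycle_indicator {s : Set α} (hs : T ⁻¹' s = s)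
    (hzero : ∀ x ∈ s, g 0 x = 0)
    (hadd : ∀ m n, ∀ x ∈ s, g (m + n) x ≤ g m x + g n (T^[m] x)) :
    IsSubadditiveCocycle T fun n => s.indicator (g n) where
  apply_zero x := by
    by_cases hx : x ∈ s
    · rw [Set.indicator_of_mem hx, hzero x hx]
    · exact Set.indicator_of_notMem hx _
  apply_add_le m n x := by
    have hm : T^[m] x ∈ s ↔ x ∈ s := by
      rw [← Set.mem_preimage, Set.preimage_iterate_eq, Function.iterate_fixed hs]
    by_cases hx : x ∈ s
    · simpa only [Set.indicator_of_mem hx, Set.indicator_of_mem (hm.2 hx)] using hadd m n x hx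
    · simp [hx, hm]

theorem birkhoffSum_nonneg {M : Type*} [AddCommMonoid M] [PartialOrder M] [IsOrderedAddMonoid M]
    {f : α → M} (hf : ∀ x, 0 ≤ f x) (n : ℕ) (x : α) : 0 ≤ birkhoffSum T f n x :=
  Finset.sum_nonneg fun _ _ => hf _

namespace IsSubadditiveCocycle

theorem sub_nat_mul (hg : IsSubadditiveCocycle T g) (c : ℝ) :
    IsSubadditiveCocycle T fun n x => g n x - n * c where
  apply_zero x := by simp [hg.apply_zero x]
  apply_add_le m n x := by
    push_cast
    linarith [hg.apply_add_le m n x]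

theorem le_birkhoffSum (hg : IsSubadditiveCocycle T g) {h : α → ℝ} (hgh : ∀ x, g 1 x ≤ h x)
    (n : ℕ) (x : α) : g n x ≤ birkhoffSum T h n x := by
  induction n with
  | zero => simp [hg.apply_zero x]
  | succ n ih =>
    rw [birkhoffSum_succ]
    exact (hg.apply_add_le n 1 x).trans (add_le_add ih (hgh _))

theorem bddBelow_range_of_apply (hg : IsSubadditiveCocycle T g) {x : α}
    (hx : BddBelow (Set.range fun n => g n x)) : BddBelow (Set.range fun n => g n (T x)) := by
  obtain ⟨C, hC⟩ := hx
  refine ⟨C - g 1 x, ?_⟩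
  rintro _ ⟨n, rfl⟩
  have hstep := hg.apply_add_le 1 n x
  rw [Function.iterate_one] at hstep
  linarith [hC ⟨1 + n, rfl⟩]

/-- The cocycle over the inverse map obtained by reading orbit segments from their ends. -/
theorem reverse {e : α ≃ α} (hg : IsSubadditiveCocycle e g) :
    IsSubadditiveCocycle e.symm fun n x => g n (e.symm^[n] x) where
  apply_zero x := hg.apply_zero x
  apply_add_le m n x := by
    have hcancel : e^[n] (e.symm^[n] (e.symm^[m] x)) = e.symm^[m] x :=
      Function.LeftInverse.iterate e.apply_symm_apply n _
    have := hg.apply_add_le n m (e.symm^[n] (e.symm^[m] x))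
    rw [hcancel, add_comm (g n _), add_comm n m] at this
    rwa [add_comm m n, Function.iterate_add_apply, add_comm n m]

end IsSubadditiveCocycle

section Integral

variable [MeasurableSpace α] {μ : Measure α}

section Normed

variable {E : Type*} [NormedAddCommGroup E] {f : α → E}

theorem integrable_comp_iterate (hT : MeasurePreserving T μ μ) (hf : Integrable f μ) (n : ℕ) :
    Integrable (fun x => f (T^[n] x)) μ :=
  (hT.iterate n).integrable_comp_of_integrable hf

theorem integrable_birkhoffSum (hT : MeasurePreserving T μ μ) (hf : Integrable f μ) (n : ℕ) :
    Integrable (birkhoffSum T f n) μ :=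
  integrable_finsetSum _ fun k _ => integrable_comp_iterate hT hf k

variable [NormedSpace ℝ E]

theorem integral_comp_iterate (hT : MeasurePreserving T μ μ) (hf : AEStronglyMeasurable f μ)
    (n : ℕ) : ∫ x, f (T^[n] x) ∂μ = ∫ x, f x ∂μ := by
  have hTn := hT.iterate n
  rw [← integral_map hTn.aemeasurable (hTn.map_eq.symm ▸ hf), hTn.map_eq]

theorem integral_birkhoffSum (hT : MeasurePreserving T μ μ) (hf : Integrable f μ) (n : ℕ) :
    ∫ x, birkhoffSum T f n x ∂μ = n • ∫ x, f x ∂μ := by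
  simp only [birkhoffSum]
  rw [integral_finsetSum _ fun k _ => integrable_comp_iterate hT hf k]
  simp [integral_comp_iterate hT hf.aestronglyMeasurable]

end Normed

theorem integral_sub_const [IsProbabilityMeasure μ] {f : α → ℝ} (hf : Integrable f μ) (c : ℝ) :
    ∫ x, (f x - c) ∂μ = ∫ x, f x ∂μ - c := by
  rw [integral_sub hf (integrable_const c), integral_const, probReal_univ, one_smul]

namespace IsSubadditiveCocycle

theorem subadditive_integral (hg : IsSubadditiveCocycle T g) (hT : MeasurePreserving T μ μ)
    (hi : ∀ n, Integrable (g n) μ) : Subadditive fun n => ∫ x, g n x ∂μ := by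
  intro m n
  have hc := integrable_comp_iterate hT (hi n) m
  calc ∫ x, g (m + n) x ∂μ ≤ ∫ x, (g m x + g n (T^[m] x)) ∂μ :=
        integral_mono (hi _) ((hi m).add hc) (hg.apply_add_le m n)
    _ = ∫ x, g m x ∂μ + ∫ x, g n x ∂μ := by
      rw [integral_add (hi m) hc, integral_comp_iterate hT (hi n).aestronglyMeasurable]

theorem integrable (hg : IsSubadditiveCocycle T g) (hT : MeasurePreserving T μ μ)
    (hm : ∀ n, AEStronglyMeasurable (g n) μ) (h1 : Integrable (g 1) μ) {f : α → ℝ}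
    (hf : Integrable f μ) (hfg : ∀ n x, birkhoffSum T f n x ≤ g n x) (n : ℕ) :
    Integrable (g n) μ :=
  integrable_of_le_of_le (hm n) (ae_of_all _ (hfg n))
    (ae_of_all _ (hg.le_birkhoffSum (fun _ => le_rfl) n)) (integrable_birkhoffSum hT hf n)
    (integrable_birkhoffSum hT h1 n)

end IsSubadditiveCocycle

theorem bddBelow_integral_div_of_birkhoffSum_le (hT : MeasurePreserving T μ μ)
    (hi : ∀ n, Integrable (g n) μ) {f : α → ℝ} (hf : Integrable f μ)
    (hfg : ∀ n x, birkhoffSum T f n x ≤ g n x) :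
    BddBelow (Set.range fun n : ℕ => (∫ x, g n x ∂μ) / n) := by
  refine ⟨min 0 (∫ x, f x ∂μ), ?_⟩
  rintro _ ⟨n, rfl⟩
  rcases n.eq_zero_or_pos with rfl | hn
  · simp
  · refine (min_le_right _ _).trans ?_
    rw [le_div_iff₀' (Nat.cast_pos.2 hn), ← nsmul_eq_mul, ← integral_birkhoffSum hT hf]
    exact integral_mono (integrable_birkhoffSum hT hf n) (hi n) (hfg n)

end Integral

/-- The points at which no block of length at most `K` has a nonpositive value: the bad set of
the Katznelson–Weiss covering argument. -/
def positiveUpTo (g : ℕ → α → ℝ) (K : ℕ) : Set α := {x | ∀ n ∈ Finset.Icc 1 K, 0 < g n x}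

theorem exists_nonpos_of_notMem_positiveUpTo {K : ℕ} {x : α} (hx : x ∉ positiveUpTo g K) :
    ∃ k, 1 ≤ k ∧ k ≤ K ∧ g k x ≤ 0 := by
  simpa [positiveUpTo, and_assoc] using hx

/-- Cut the orbit segment into blocks of length at most `K` with nonpositive value and single
steps at the points where no such block starts; the extra length `K` leaves room for the last
block. -/
theorem IsSubadditiveCocycle.add_le_birkhoffSum_indicator (hg : IsSubadditiveCocycle T g)
    {h : α → ℝ} (hh : ∀ x, 0 ≤ h x) (hgh : ∀ x, g 1 x ≤ h x) (K n : ℕ) (x : α) :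
    g (n + K) x ≤ birkhoffSum T ((positiveUpTo g K).indicator h) n x
      + birkhoffSum T h K (T^[n] x) := by
  induction n using Nat.strong_induction_on generalizing x with
  | _ n ih =>
  by_cases hx : x ∈ positiveUpTo g K
  · obtain _ | m := n
    · simpa using hg.le_birkhoffSum hgh K x
    · have hstep := hg.apply_add_le 1 (m + K) x
      have hrest := ih m m.lt_succ_self (T x)
      rw [birkhoffSum_succ', Set.indicator_of_mem hx, Function.iterate_succ_apply]
      rw [Function.iterate_one, ← add_assoc, add_comm 1 m] at hstep
      linarith [hgh x]
  · obtain ⟨k, hk, hkK, hgk⟩ := exists_nonpos_of_notMem_positiveUpTo hx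
    rcases le_total k n with hkn | hnk
    · obtain ⟨m, rfl⟩ := Nat.exists_eq_add_of_le hkn
      have hblock := hg.apply_add_le k (m + K) x
      have hrest := ih m (by lia) (T^[k] x)
      have hpos : 0 ≤ birkhoffSum T ((positiveUpTo g K).indicator h) k x :=
        birkhoffSum_nonneg (Set.indicator_nonneg fun y _ => hh y) k x
      rw [← Function.iterate_add_apply, add_comm m k] at hrest
      rw [birkhoffSum_add, add_assoc k m K]
      linarith
    · obtain ⟨i, rfl⟩ := Nat.exists_eq_add_of_le hnk
      obtain ⟨j, rfl⟩ := Nat.exists_eq_add_of_le hkK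
      have hblock := hg.apply_add_le (n + i) (n + j) x
      have hrest := hg.le_birkhoffSum hgh (n + j) (T^[n + i] x)
      have hind := birkhoffSum_nonneg (T := T)
        (Set.indicator_nonneg fun y (_ : y ∈ positiveUpTo g (n + i + j)) => hh y) n x
      have hpos := birkhoffSum_nonneg (T := T) hh i (T^[n] x)
      rw [show n + i + j = i + (n + j) by ring] at *
      rw [birkhoffSum_add, ← Function.iterate_add_apply, add_comm i n, ← add_assoc]
      linarith

section Lower

variable [MeasurableSpace α] {μ : Measure α}

theorem nullMeasurableSet_positiveUpTo (hg : ∀ n, AEStronglyMeasurable (g n) μ) (K : ℕ) :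
    NullMeasurableSet (positiveUpTo g K) μ := by
  simp only [positiveUpTo, Set.ofPred_forall]
  exact Finset.nullMeasurableSet_biInter _ fun n _ =>
    aestronglyMeasurable_const.nullMeasurableSet_lt (hg n)

theorem nullMeasurableSet_bddBelow_range (hg : ∀ n, AEStronglyMeasurable (g n) μ) :
    NullMeasurableSet {x | BddBelow (Set.range fun n => g n x)} μ := by
  refine (measurableSet_bddBelow_range fun n =>
    (hg n).stronglyMeasurable_mk.measurable).nullMeasurableSet.congr ?_
  filter_upwards [ae_all_iff.2 fun n => (hg n).ae_eq_mk] with x hx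
  change BddBelow _ = BddBelow _
  simp only [hx]

theorem tendsto_integral_indicator_positiveUpTo (hi : ∀ n, AEStronglyMeasurable (g n) μ)
    {h : α → ℝ} (hh : Integrable h μ) (hne : ∀ᵐ x ∂μ, ∃ n ≥ 1, g n x ≤ 0) :
    Tendsto (fun K => ∫ x, (positiveUpTo g K).indicator h x ∂μ) atTop (𝓝 0) := by
  rw [← integral_zero α ℝ]
  refine tendsto_integral_of_dominated_convergence (fun x => ‖h x‖)
    (fun K => hh.aestronglyMeasurable.indicator₀ (nullMeasurableSet_positiveUpTo hi K)) hh.norm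
    (fun K => ae_of_all _ fun x => norm_indicator_le_norm_self h x) ?_
  filter_upwards [hne] with x ⟨n, hn, hgn⟩
  refine tendsto_const_nhds.congr' ?_
  filter_upwards [eventually_ge_atTop n] with K hK
  refine (Set.indicator_of_notMem (fun hx => ?_) h).symm
  exact (hx n (Finset.mem_Icc.2 ⟨hn, hK⟩)).not_ge hgn

theorem le_of_forall_nat_add_mul_le {R : Type*} [Field R] [LinearOrder R] [IsStrictOrderedRing R]
    [Archimedean R] {a b c : R} {K : ℕ} (h : ∀ n : ℕ, (n + K : ℕ) * a ≤ n * b + c) : a ≤ b := by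
  by_contra! hab
  obtain ⟨n, hn⟩ := exists_nat_gt ((c - K * a) / (a - b))
  rw [div_lt_iff₀ (sub_pos.2 hab)] at hn
  have := h n
  push_cast at this
  linarith

namespace IsSubadditiveCocycle

theorem nonpos_of_ae_exists_nonpos (hg : IsSubadditiveCocycle T g)
    (hT : MeasurePreserving T μ μ) (hi : ∀ n, Integrable (g n) μ) {γ : ℝ}
    (hγ : ∀ n : ℕ, n * γ ≤ ∫ x, g n x ∂μ) (hne : ∀ᵐ x ∂μ, ∃ n ≥ 1, g n x ≤ 0) : γ ≤ 0 := by
  have hm n := (hi n).aestronglyMeasurable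
  have hh : Integrable (fun x => max (g 1 x) 0) μ := (hi 1).pos_part
  refine ge_of_tendsto' (tendsto_integral_indicator_positiveUpTo hm hh hne) fun K => ?_
  have hind := hh.indicator₀ (nullMeasurableSet_positiveUpTo hm K)
  refine le_of_forall_nat_add_mul_le (K := K) (c := K * ∫ x, max (g 1 x) 0 ∂μ) fun n => ?_
  have hS := integrable_birkhoffSum hT hind n
  have hS' := integrable_comp_iterate hT (integrable_birkhoffSum hT hh K) n
  calc ((n + K : ℕ) : ℝ) * γ ≤ ∫ x, g (n + K) x ∂μ := hγ _
    _ ≤ ∫ x, (birkhoffSum T ((positiveUpTo g K).indicator fun x => max (g 1 x) 0) n x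
        + birkhoffSum T (fun x => max (g 1 x) 0) K (T^[n] x)) ∂μ :=
      integral_mono (hi _) (hS.add hS') (hg.add_le_birkhoffSum_indicator
        (fun _ => le_max_right _ _) (fun _ => le_max_left _ _) K n)
    _ = _ := by
      rw [integral_add hS hS', integral_comp_iterate hT
        (integrable_birkhoffSum hT hh K).aestronglyMeasurable,
        integral_birkhoffSum hT hind, integral_birkhoffSum hT hh, nsmul_eq_mul, nsmul_eq_mul]

/-- Unboundedness below passes from `T x` to `x`, so by ergodicity it has measure zero or full
measure; in the latter case almost every orbit starts with a nonpositive block. -/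
theorem ae_bddBelow_range [IsFiniteMeasure μ] (hg : IsSubadditiveCocycle T g)
    (hT : Ergodic T μ) (hi : ∀ n, Integrable (g n) μ) {γ : ℝ} (hγ0 : 0 < γ)
    (hγ : ∀ n : ℕ, n * γ ≤ ∫ x, g n x ∂μ) :
    ∀ᵐ x ∂μ, BddBelow (Set.range fun n => g n x) := by
  have hm n := (hi n).aestronglyMeasurable
  rcases hT.ae_empty_or_univ_of_ae_le_preimage (nullMeasurableSet_bddBelow_range hm)
    (ae_of_all _ fun _ => hg.bddBelow_range_of_apply) with hempty | huniv
  · refine absurd hγ0 (hg.nonpos_of_ae_exists_nonpos hT.toMeasurePreserving hi hγ ?_).not_gt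
    filter_upwards [hempty.mem_iff] with x hx
    obtain ⟨_, ⟨n, rfl⟩, hn⟩ := not_bddBelow_iff.1 hx.1 0
    exact ⟨n, Nat.one_le_iff_ne_zero.2 fun h => by simp [h, hg.apply_zero] at hn, hn.le⟩
  · exact eventuallyEq_univ.1 huniv

theorem ae_eventually_pos [IsProbabilityMeasure μ] (hg : IsSubadditiveCocycle T g)
    (hT : Ergodic T μ) (hi : ∀ n, Integrable (g n) μ) {γ : ℝ} (hγ0 : 0 < γ)
    (hγ : ∀ n : ℕ, n * γ ≤ ∫ x, g n x ∂μ) : ∀ᵐ x ∂μ, ∀ᶠ n in atTop, 0 < g n x := by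
  have hbdd : ∀ᵐ x ∂μ, BddBelow (Set.range fun n : ℕ => g n x - n * (γ / 2)) := by
    refine (hg.sub_nat_mul (γ / 2)).ae_bddBelow_range hT
      (fun n => (hi n).sub (integrable_const _)) (half_pos hγ0) fun n => ?_
    rw [integral_sub_const (hi n)]
    linarith [hγ n]
  filter_upwards [hbdd] with x ⟨C, hC⟩
  filter_upwards [(tendsto_natCast_atTop_atTop.atTop_mul_const (half_pos hγ0)).eventually_gt_atTop
    (-C)] with n hn
  linarith [hC ⟨n, rfl⟩]

end IsSubadditiveCocycle

theorem ae_tendsto_div_natCast {u : ℕ → α → ℝ} {γ : ℝ}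
    (hlower : ∀ b < γ, ∀ᵐ x ∂μ, ∀ᶠ n : ℕ in atTop, 0 < u n x - n * b)
    (hupper : ∀ b > γ, ∀ᵐ x ∂μ, ∀ᶠ n : ℕ in atTop, u n x - n * b < 0) :
    ∀ᵐ x ∂μ, Tendsto (fun n : ℕ => u n x / n) atTop (𝓝 γ) := by
  have hlower' : ∀ᵐ x ∂μ, ∀ q : ℚ, q < γ → ∀ᶠ n : ℕ in atTop, 0 < u n x - n * q :=
    ae_all_iff.2 fun q => eventually_imp_distrib_left.2 (hlower q)
  have hupper' : ∀ᵐ x ∂μ, ∀ q : ℚ, γ < q → ∀ᶠ n : ℕ in atTop, u n x - n * q < 0 :=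
    ae_all_iff.2 fun q => eventually_imp_distrib_left.2 (hupper q)
  filter_upwards [hlower', hupper'] with x hxl hxu
  refine tendsto_order.2 ⟨fun b hb => ?_, fun b hb => ?_⟩
  · obtain ⟨q, hbq, hqγ⟩ := exists_rat_btwn hb
    filter_upwards [hxl q hqγ, eventually_gt_atTop 0] with n hn hn0
    exact hbq.trans ((lt_div_iff₀' (Nat.cast_pos.2 hn0)).2 (sub_pos.1 hn))
  · obtain ⟨q, hγq, hqb⟩ := exists_rat_btwn hb
    filter_upwards [hxu q hγq, eventually_gt_atTop 0] with n hn hn0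
    exact ((div_lt_iff₀' (Nat.cast_pos.2 hn0)).2 (sub_neg.1 hn)).trans hqb

end Lower

section Birkhoff

variable [MeasurableSpace α] {μ : Measure α} [IsProbabilityMeasure μ]

theorem ae_eventually_birkhoffSum_pos (hT : Ergodic T μ) {f : α → ℝ} (hf : Integrable f μ)
    (hpos : 0 < ∫ x, f x ∂μ) : ∀ᵐ x ∂μ, ∀ᶠ n in atTop, 0 < birkhoffSum T f n x :=
  (isSubadditiveCocycle_birkhoffSum T f).ae_eventually_pos hT
    (integrable_birkhoffSum hT.toMeasurePreserving hf) hpos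
    fun n => by rw [integral_birkhoffSum hT.toMeasurePreserving hf, nsmul_eq_mul]

theorem ae_tendsto_birkhoffSum_div (hT : Ergodic T μ) {f : α → ℝ} (hf : Integrable f μ) :
    ∀ᵐ x ∂μ, Tendsto (fun n : ℕ => birkhoffSum T f n x / n) atTop (𝓝 (∫ x, f x ∂μ)) := by
  refine ae_tendsto_div_natCast (fun b hb => ?_) (fun b hb => ?_)
  · have hpos : 0 < ∫ x, (f x - b) ∂μ := by
      rwa [integral_sub_const hf, sub_pos]
    filter_upwards [ae_eventually_birkhoffSum_pos hT (hf.sub (integrable_const b)) hpos] with x hx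
    simpa [birkhoffSum] using hx
  · have hpos : 0 < ∫ x, (b - f x) ∂μ := by
      rw [integral_sub (integrable_const b) hf, integral_const, probReal_univ, one_smul]
      exact sub_pos.2 hb
    filter_upwards [ae_eventually_birkhoffSum_pos hT ((integrable_const b).sub hf) hpos]
      with x hx
    simpa [birkhoffSum] using hx

theorem ae_tendsto_comp_iterate_div (hT : Ergodic T μ) {f : α → ℝ} (hf : Integrable f μ) :
    ∀ᵐ x ∂μ, Tendsto (fun n : ℕ => f (T^[n] x) / n) atTop (𝓝 0) := by
  filter_upwards [ae_tendsto_birkhoffSum_div hT hf] with x hx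
  have hsucc : Tendsto (fun n : ℕ => birkhoffSum T f (n + 1) x / (n + 1 : ℕ) * ((n + 1 : ℕ) / n))
      atTop (𝓝 ((∫ x, f x ∂μ) * 1)) :=
    ((tendsto_add_atTop_iff_nat 1).2 hx).mul (by
      simpa [add_comm] using tendsto_add_mul_div_add_mul_atTop_nhds (𝕜 := ℝ) 1 0 1 one_ne_zero)
  have hdiff := hsucc.sub hx
  rw [mul_one, sub_self] at hdiff
  refine hdiff.congr fun n => ?_
  rw [div_mul_div_cancel₀ (Nat.cast_ne_zero.2 n.succ_ne_zero), birkhoffSum_succ]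
  ring

end Birkhoff

section Upper

namespace IsSubadditiveCocycle

theorem sum_range_apply_add_le (hg : IsSubadditiveCocycle T g) (m n : ℕ) (x : α) :
    ∑ i ∈ Finset.range m, g (n + i) x
      ≤ ∑ i ∈ Finset.range m, g i x + birkhoffSum T (g m) n x := by
  induction n with
  | zero => simp
  | succ n ih =>
    have hshift : ∑ i ∈ Finset.range m, g (n + 1 + i) x + g n x
        = ∑ i ∈ Finset.range m, g (n + i) x + g (n + m) x := by
      rw [← Finset.sum_range_succ, Finset.sum_range_succ']
      simp only [add_assoc, add_comm 1, add_zero]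
    rw [birkhoffSum_succ]
    linarith [hg.apply_add_le n m x]

/-- Averages over the `m` phases at which a segment of length `n + m` can be cut into blocks of
length `m`. -/
theorem nat_mul_apply_add_le (hg : IsSubadditiveCocycle T g) {h : α → ℝ} (hh : ∀ x, 0 ≤ h x)
    (hgh : ∀ x, g 1 x ≤ h x) (m n : ℕ) (x : α) :
    m * g (n + m) x ≤ ∑ i ∈ Finset.range m, g i x + birkhoffSum T (g m) n x
      + m * birkhoffSum T h m (T^[n] x) := by
  have hphase : ∀ i ∈ Finset.range m,
      g (n + m) x ≤ g (n + i) x + birkhoffSum T h m (T^[n] x) := by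
    intro i hi
    obtain ⟨k, rfl⟩ := Nat.exists_eq_add_of_le (Finset.mem_range.1 hi).le
    have hcut := hg.apply_add_le (n + i) k x
    have htail := hg.le_birkhoffSum hgh k (T^[n + i] x)
    have hpos := birkhoffSum_nonneg (T := T) hh i (T^[n] x)
    rw [birkhoffSum_add, ← Function.iterate_add_apply, add_comm i n, ← add_assoc]
    linarith
  calc (m : ℝ) * g (n + m) x = ∑ _i ∈ Finset.range m, g (n + m) x := by simp
    _ ≤ ∑ i ∈ Finset.range m, (g (n + i) x + birkhoffSum T h m (T^[n] x)) :=
      Finset.sum_le_sum hphase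
    _ = ∑ i ∈ Finset.range m, g (n + i) x + m * birkhoffSum T h m (T^[n] x) := by
      simp [Finset.sum_add_distrib]
    _ ≤ _ := by gcongr; exact hg.sum_range_apply_add_le m n x

variable [MeasurableSpace α] {μ : Measure α} [IsProbabilityMeasure μ]

theorem ae_eventually_neg (hg : IsSubadditiveCocycle T g) (hT : Ergodic T μ)
    (hi : ∀ n, Integrable (g n) μ) {m : ℕ} (hneg : ∫ x, g m x ∂μ < 0) :
    ∀ᵐ x ∂μ, ∀ᶠ n in atTop, g n x < 0 := by
  have hh : Integrable (fun x => max (g 1 x) 0) μ := (hi 1).pos_part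
  filter_upwards [ae_tendsto_birkhoffSum_div hT (hi m), ae_tendsto_comp_iterate_div hT
    (integrable_birkhoffSum hT.toMeasurePreserving hh m)] with x hblocks htail
  have hlim : Tendsto (fun n : ℕ => (∑ i ∈ Finset.range m, g i x) / n
      + birkhoffSum T (g m) n x / n
      + m * (birkhoffSum T (fun x => max (g 1 x) 0) m (T^[n] x) / n))
      atTop (𝓝 (0 + ∫ x, g m x ∂μ + m * 0)) :=
    ((tendsto_const_div_atTop_nhds_zero_nat _).add hblocks).add (htail.const_mul _)
  rw [zero_add, mul_zero, add_zero] at hlim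
  suffices ∀ᶠ n in atTop, g (n + m) x < 0 by
    rwa [← map_add_atTop_eq_nat m, eventually_map]
  filter_upwards [hlim.eventually_lt_const hneg, eventually_gt_atTop 0] with n hn hn0
  rw [← mul_div_assoc, ← add_div, ← add_div, div_lt_iff₀ (Nat.cast_pos.2 hn0), zero_mul] at hn
  have hmul := hg.nat_mul_apply_add_le (fun x => le_max_right (g 1 x) 0)
    (fun x => le_max_left (g 1 x) 0) m n x
  exact neg_of_mul_neg_right (hmul.trans_lt hn) m.cast_nonneg

end IsSubadditiveCocycle

end Upper

section Kingman

theorem nat_mul_le_of_subadditive_of_tendsto {u : ℕ → ℝ} (hu : Subadditive u) (h0 : u 0 = 0)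
    {γ : ℝ} (hγ : Tendsto (fun n : ℕ => u n / n) atTop (𝓝 γ)) (n : ℕ) : n * γ ≤ u n := by
  obtain rfl | hn := n.eq_zero_or_pos
  · simp [h0]
  · have hbdd := hγ.bddBelow_range
    rw [tendsto_nhds_unique hγ (hu.tendsto_lim hbdd), ← le_div_iff₀' (Nat.cast_pos.2 hn)]
    exact hu.lim_le_div hbdd hn.ne'

namespace IsSubadditiveCocycle

variable [MeasurableSpace α] {μ : Measure α} [IsProbabilityMeasure μ]

theorem ae_tendsto_div (hg : IsSubadditiveCocycle T g) (hT : Ergodic T μ)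
    (hi : ∀ n, Integrable (g n) μ) {γ : ℝ}
    (hγ : Tendsto (fun n : ℕ => (∫ x, g n x ∂μ) / n) atTop (𝓝 γ)) :
    ∀ᵐ x ∂μ, Tendsto (fun n : ℕ => g n x / n) atTop (𝓝 γ) := by
  have hsub := hg.subadditive_integral hT.toMeasurePreserving hi
  have hle := nat_mul_le_of_subadditive_of_tendsto hsub (by simp [hg.apply_zero]) hγ
  have hi' (b : ℝ) (n : ℕ) : Integrable (fun x => g n x - n * b) μ :=
    (hi n).sub (integrable_const _)
  refine ae_tendsto_div_natCast (fun b hb => ?_) (fun b hb => ?_)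
  · refine (hg.sub_nat_mul b).ae_eventually_pos hT (hi' b) (sub_pos.2 hb) fun n => ?_
    rw [integral_sub_const (hi n)]
    linarith [hle n]
  · obtain ⟨m, hm, hm0⟩ :=
      ((hγ.eventually_lt_const hb).and (eventually_gt_atTop 0)).exists
    refine (hg.sub_nat_mul b).ae_eventually_neg hT (hi' b) (m := m) ?_
    rw [integral_sub_const (hi m), sub_neg, ← div_lt_iff₀' (Nat.cast_pos.2 hm0)]
    exact hm

theorem exists_ae_tendsto_div_reverse {e : α ≃ᵐ α} (hg : IsSubadditiveCocycle e g)
    (he : Ergodic e μ) (hi : ∀ n, Integrable (g n) μ)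
    (hbdd : BddBelow (Set.range fun n : ℕ => (∫ x, g n x ∂μ) / n)) :
    ∃ γ : ℝ, ∀ᵐ x ∂μ, Tendsto (fun n : ℕ => g n x / n) atTop (𝓝 γ) ∧
      Tendsto (fun n : ℕ => g n (e.symm^[n] x) / n) atTop (𝓝 γ) := by
  have hlim := (hg.subadditive_integral he.toMeasurePreserving hi).tendsto_lim hbdd
  have hsymm := he.symm.toMeasurePreserving
  have hrev := (hg.reverse (e := e.toEquiv)).ae_tendsto_div he.symm
    (fun n => integrable_comp_iterate hsymm (hi n) n)
    (hlim.congr fun n => by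
      rw [← integral_comp_iterate hsymm (hi n).aestronglyMeasurable n]; rfl)
  exact ⟨_, (hg.ae_tendsto_div he hi hlim).and hrev⟩

/-- Each of two opposite cocycles bounds the other from below by a Birkhoff sum. -/
theorem exists_ae_tendsto_div_of_neg_le {e : α ≃ᵐ α} {g' : ℕ → α → ℝ}
    (hg : IsSubadditiveCocycle e g) (hg' : IsSubadditiveCocycle e g') (he : Ergodic e μ)
    (hm : ∀ n, AEStronglyMeasurable (g n) μ) (hi : Integrable (g 1) μ)
    (hi' : Integrable (g' 1) μ) (hneg : ∀ n x, -g' n x ≤ g n x) :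
    ∃ γ : ℝ, ∀ᵐ x ∂μ, Tendsto (fun n : ℕ => g n x / n) atTop (𝓝 γ) ∧
      Tendsto (fun n : ℕ => g n (e.symm^[n] x) / n) atTop (𝓝 γ) := by
  have hminorant (n : ℕ) (x : α) : birkhoffSum e (-g' 1) n x ≤ g n x := by
    rw [birkhoffSum_neg]
    exact (neg_le_neg (hg'.le_birkhoffSum (fun _ => le_rfl) n x)).trans (hneg n x)
  have hint := hg.integrable he.toMeasurePreserving hm hi hi'.neg hminorant
  exact hg.exists_ae_tendsto_div_reverse he hint
    (bddBelow_integral_div_of_birkhoffSum_le he.toMeasurePreserving hint hi'.neg hminorant)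

end IsSubadditiveCocycle

end Kingman

end Ergodic

namespace MaxPlus

section Algebra

variable {d : ℕ}

theorem RMax.coe_unbotD {a : RMax} (ha : a ≠ ⊥) : ((a.unbotD 0 : ℝ) : RMax) = a := by
  lift a to ℝ using ha
  rfl

theorem mulVec_mono (A : Mat d) : Monotone (mulVec A) :=
  fun _ _ h i => Finset.sup_mono_fun fun j _ => add_le_add_right (h j) (A i j)

theorem mulVec_add_const (A : Mat d) (v : Fin d → RMax) (a : RMax) :
    (mulVec A fun j => v j + a) = fun i => mulVec A v i + a := by
  funext i
  rw [mulVec, mulVec, Finset.apply_sup_eq_sup_comp_of_linearOrder (· + a)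
    (fun _ _ h => add_le_add_left h a) (WithBot.bot_add a)]
  simp only [Function.comp_def, add_assoc]

theorem mulVec_ne_bot {A : Mat d} {v : Fin d → RMax} {i : Fin d} (hA : ∃ j, A i j ≠ ⊥)
    (hv : ∀ j, v j ≠ ⊥) : mulVec A v i ≠ ⊥ := by
  obtain ⟨j, hj⟩ := hA
  refine ne_bot_of_le_ne_bot ?_ (Finset.le_sup (f := fun j => A i j + v j) (Finset.mem_univ j))
  exact WithBot.add_ne_bot.2 ⟨hj, hv j⟩

theorem prodZero_translate (s : ℤ → Mat d) (c m : ℤ) (n : ℕ) :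
    prodZero (fun k => s (k + c)) m n = prodZero s (m + c) n := by
  induction n with
  | zero => rfl
  | succ n ih => rw [prodZero, prodZero, ih, add_right_comm]

theorem prodZero_add_le (s : ℤ → Mat d) (m : ℤ) (k n : ℕ) {a : RMax}
    (ha : ∀ j, prodZero s m k j ≤ a) :
    prodZero s m (k + n) ≤ fun i => prodZero s (m + k) n i + a := by
  induction n with
  | zero => simpa [prodZero, Pi.le_def] using ha
  | succ n ih =>
    rw [← add_assoc, prodZero, prodZero, ← mulVec_add_const, Nat.cast_add, ← add_assoc]
    exact mulVec_mono _ ih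

theorem le_prodZero_add (s : ℤ → Mat d) (m : ℤ) (k n : ℕ) {a : RMax}
    (ha : ∀ j, a ≤ prodZero s m k j) :
    (fun i => prodZero s (m + k) n i + a) ≤ prodZero s m (k + n) := by
  induction n with
  | zero => simpa [prodZero, Pi.le_def] using ha
  | succ n ih =>
    rw [← add_assoc, prodZero, prodZero, ← mulVec_add_const, Nat.cast_add, ← add_assoc]
    exact mulVec_mono _ ih

theorem x_one (s : ℤ → Mat d) : x s 1 = mulVec (s 0) fun _ => 0 := by
  simp [x, prodZero]

theorem shift_iterate {S : Type*} (s : ℤ → S) (n : ℕ) : shift^[n] s = fun k => s (k + n) := by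
  induction n with
  | zero => simp
  | succ n ih =>
    funext k
    rw [Function.iterate_succ_apply', ih, shift, Nat.cast_succ, add_right_comm, add_assoc]

theorem x_shift_iterate (s : ℤ → Mat d) (m n : ℕ) :
    x (shift^[m] s) n = prodZero s (0 + m) n := by
  rw [shift_iterate, x, prodZero_translate]

variable [NeZero d]

theorem le_maxCoord (v : Fin d → RMax) (i : Fin d) : v i ≤ maxCoord v :=
  Finset.le_sup' v (Finset.mem_univ i)

theorem minCoord_le (v : Fin d → RMax) (i : Fin d) : minCoord v ≤ v i :=
  Finset.inf'_le v (Finset.mem_univ i)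

theorem minCoord_ne_bot {v : Fin d → RMax} (hv : ∀ i, v i ≠ ⊥) : minCoord v ≠ ⊥ := by
  obtain ⟨i, -, hi⟩ := Finset.exists_mem_eq_inf' Finset.univ_nonempty v
  exact hi.trans_ne (hv i)

theorem maxCoord_ne_bot {v : Fin d → RMax} (hv : ∀ i, v i ≠ ⊥) : maxCoord v ≠ ⊥ :=
  ne_bot_of_le_ne_bot (hv 0) (le_maxCoord v 0)

theorem maxCoord_x_add_le (s : ℤ → Mat d) (m n : ℕ) :
    maxCoord (x s (m + n)) ≤ maxCoord (x s m) + maxCoord (x (shift^[m] s) n) := by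
  refine Finset.sup'_le _ _ fun i _ => (prodZero_add_le s 0 m n (le_maxCoord (x s m)) i).trans ?_
  rw [add_comm (maxCoord _), ← x_shift_iterate]
  exact add_le_add_left (le_maxCoord _ i) _

theorem le_minCoord_x_add (s : ℤ → Mat d) (m n : ℕ) :
    minCoord (x s m) + minCoord (x (shift^[m] s) n) ≤ minCoord (x s (m + n)) := by
  refine Finset.le_inf' _ _ fun i _ =>
    le_trans ?_ (le_prodZero_add s 0 m n (minCoord_le (x s m)) i)
  rw [add_comm (minCoord _), ← x_shift_iterate]
  exact add_le_add_left (minCoord_le _ i) _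

end Algebra

section Growth

variable {d : ℕ}

/-- The paths of matrices having at least one finite entry on each row, along which all the
products `prodZero` are finite. -/
def finiteRows (d : ℕ) : Set (ℤ → Mat d) := {s | ∀ n i, ∃ j, s n i j ≠ ⊥}

theorem translate_mem_finiteRows_iff {s : ℤ → Mat d} (c : ℤ) :
    (fun k => s (k + c)) ∈ finiteRows d ↔ s ∈ finiteRows d :=
  ⟨fun h n => by simpa using h (n - c), fun h n => h (n + c)⟩

theorem shift_preimage_finiteRows : shift ⁻¹' finiteRows d = finiteRows d :=
  Set.ext fun _ => translate_mem_finiteRows_iff 1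

theorem shift_iterate_mem_finiteRows_iff {s : ℤ → Mat d} (n : ℕ) :
    shift^[n] s ∈ finiteRows d ↔ s ∈ finiteRows d := by
  rw [shift_iterate, translate_mem_finiteRows_iff]

theorem prodZero_ne_bot {s : ℤ → Mat d} (hs : s ∈ finiteRows d) (m : ℤ) (n : ℕ) (i : Fin d) :
    prodZero s m n i ≠ ⊥ := by
  induction n generalizing i with
  | zero => exact WithBot.zero_ne_bot
  | succ n ih => exact mulVec_ne_bot (hs _ i) ih

variable [NeZero d]

/-- The real number `max_i x_i(n,0)` on paths with finite rows, and `0` on other paths. -/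
noncomputable def topGrowth (n : ℕ) : (ℤ → Mat d) → ℝ :=
  (finiteRows d).indicator fun s => (maxCoord (x s n)).unbotD 0

/-- The real number `min_i x_i(n,0)` on paths with finite rows, and `0` on other paths. -/
noncomputable def botGrowth (n : ℕ) : (ℤ → Mat d) → ℝ :=
  (finiteRows d).indicator fun s => (minCoord (x s n)).unbotD 0

theorem coe_topGrowth {s : ℤ → Mat d} (hs : s ∈ finiteRows d) (n : ℕ) :
    (topGrowth n s : RMax) = maxCoord (x s n) := by
  rw [topGrowth, Set.indicator_of_mem hs]
  exact RMax.coe_unbotD (maxCoord_ne_bot (prodZero_ne_bot hs 0 n))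

theorem coe_botGrowth {s : ℤ → Mat d} (hs : s ∈ finiteRows d) (n : ℕ) :
    (botGrowth n s : RMax) = minCoord (x s n) := by
  rw [botGrowth, Set.indicator_of_mem hs]
  exact RMax.coe_unbotD (minCoord_ne_bot (prodZero_ne_bot hs 0 n))

theorem botGrowth_le_topGrowth (n : ℕ) (s : ℤ → Mat d) : botGrowth n s ≤ topGrowth n s := by
  refine Set.indicator_le_indicator' fun hs => ?_
  exact WithBot.unbotD_mono (minCoord_ne_bot (prodZero_ne_bot hs 0 n))
    ((minCoord_le _ 0).trans (le_maxCoord _ 0))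

theorem isSubadditiveCocycle_topGrowth :
    IsSubadditiveCocycle shift (topGrowth : ℕ → (ℤ → Mat d) → ℝ) :=
  isSubadditiveCocycle_indicator shift_preimage_finiteRows
    (fun s _ => by simp [maxCoord, x, prodZero])
    fun m n s hs => (WithBot.unbotD_le_iff fun h =>
      absurd h (maxCoord_ne_bot (prodZero_ne_bot hs 0 _))).2 <|
      (maxCoord_x_add_le s m n).trans
        (add_le_add (WithBot.le_coe_unbotD _ _) (WithBot.le_coe_unbotD _ _))

theorem isSubadditiveCocycle_neg_botGrowth :
    IsSubadditiveCocycle shift fun n (s : ℤ → Mat d) => -botGrowth n s := by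
  have hcocycle : IsSubadditiveCocycle shift fun n =>
      (finiteRows d).indicator fun s => -(minCoord (x s n)).unbotD 0 := by
    refine isSubadditiveCocycle_indicator shift_preimage_finiteRows
      (fun s _ => by simp [minCoord, x, prodZero]) fun m n s hs => ?_
    have hfin (k : ℕ) : minCoord (x s k) ≠ ⊥ := minCoord_ne_bot (prodZero_ne_bot hs 0 k)
    have hfin' : minCoord (x (shift^[m] s) n) ≠ ⊥ :=
      minCoord_ne_bot (prodZero_ne_bot ((shift_iterate_mem_finiteRows_iff m).2 hs) 0 n)
    rw [← neg_add, neg_le_neg_iff, WithBot.le_unbotD_iff (hfin _), WithBot.coe_add,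
      RMax.coe_unbotD (hfin m), RMax.coe_unbotD hfin']
    exact le_minCoord_x_add s m n
  simpa only [botGrowth, Set.indicator_neg] using hcocycle

end Growth

section Measurability

theorem RMax.toEReal_bot : RMax.toEReal ⊥ = ⊥ := rfl

theorem RMax.toEReal_coe (r : ℝ) : RMax.toEReal r = r := rfl

theorem RMax.toEReal_add (a b : RMax) : (a + b).toEReal = a.toEReal + b.toEReal := by
  induction a using WithBot.recBotCoe with
  | bot => simp [toEReal_bot]
  | coe a =>
    induction b using WithBot.recBotCoe with
    | bot => simp [toEReal_bot]
    | coe b => rw [← WithBot.coe_add, toEReal_coe, toEReal_coe, toEReal_coe, EReal.coe_add]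

theorem RMax.toEReal_mono : Monotone RMax.toEReal := by
  intro a b hab
  induction a using WithBot.recBotCoe with
  | bot => exact bot_le
  | coe a =>
    induction b using WithBot.recBotCoe with
    | bot => simp at hab
    | coe b => exact EReal.coe_le_coe_iff.2 (WithBot.coe_le_coe.1 hab)

theorem RMax.toReal_toEReal (a : RMax) : a.toEReal.toReal = a.unbotD 0 := by
  induction a using WithBot.recBotCoe <;> simp [toEReal_bot, toEReal_coe]

theorem RMax.toEReal_eq_bot_iff {a : RMax} : a.toEReal = ⊥ ↔ a = ⊥ := by
  induction a using WithBot.recBotCoe <;> simp [toEReal_bot, toEReal_coe]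

theorem RMax.measurable_toEReal : Measurable RMax.toEReal := comap_measurable _

theorem RMax.measurable_unbotD : Measurable fun a : RMax => a.unbotD 0 := by
  simpa only [toReal_toEReal] using measurable_toEReal.ereal_toReal

theorem RMax.measurableSet_singleton_bot : MeasurableSet {(⊥ : RMax)} := by
  convert measurable_toEReal (measurableSet_singleton ⊥)
  exact Set.ext fun _ => toEReal_eq_bot_iff.symm

instance : MeasurableSup₂ RMax where
  measurable_sup := measurable_comap_iff.2 <| by
    simp only [Function.comp_def, RMax.toEReal_mono.map_sup]
    exact (RMax.measurable_toEReal.comp measurable_fst).sup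
      (RMax.measurable_toEReal.comp measurable_snd)

instance : MeasurableInf₂ RMax where
  measurable_inf := measurable_comap_iff.2 <| by
    simp only [Function.comp_def, RMax.toEReal_mono.map_inf]
    exact (RMax.measurable_toEReal.comp measurable_fst).inf
      (RMax.measurable_toEReal.comp measurable_snd)

instance : MeasurableAdd₂ RMax where
  measurable_add := measurable_comap_iff.2 <| by
    simp only [Function.comp_def, RMax.toEReal_add]
    exact (RMax.measurable_toEReal.comp measurable_fst).add
      (RMax.measurable_toEReal.comp measurable_snd)

variable {d : ℕ} {δ : Type*} [MeasurableSpace δ]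

theorem measurable_mulVec {A : δ → Mat d} {v : δ → Fin d → RMax} (hA : Measurable A)
    (hv : Measurable v) : Measurable fun a => mulVec (A a) (v a) := by
  refine measurable_pi_lambda _ fun i => ?_
  have hsup : Measurable (Finset.univ.sup fun j a => A a i j + v a j) :=
    Finset.sup_induction measurable_const (fun _ h₁ _ h₂ => h₁.sup h₂) fun j _ =>
      ((measurable_pi_apply j).comp ((measurable_pi_apply i).comp hA)).add
        ((measurable_pi_apply j).comp hv)
  convert hsup using 1
  funext a
  rw [mulVec, Finset.sup_apply]

theorem measurable_prodZero (m : ℤ) (n : ℕ) :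
    Measurable fun s : ℤ → Mat d => prodZero s m n := by
  induction n with
  | zero => exact measurable_const
  | succ n ih => exact measurable_mulVec (measurable_pi_apply _) ih

theorem measurableSet_finiteRows : MeasurableSet (finiteRows d) := by
  simp only [finiteRows, Set.ofPred_forall, Set.ofPred_exists]
  refine .iInter fun n => .iInter fun i => .iUnion fun j => ?_
  have hentry : Measurable fun s : ℤ → Mat d => s n i j :=
    (measurable_pi_apply j).comp ((measurable_pi_apply i).comp (measurable_pi_apply n))
  exact hentry RMax.measurableSet_singleton_bot.compl

variable [NeZero d]

theorem measurable_maxCoord : Measurable (maxCoord : (Fin d → RMax) → RMax) := by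
  have hsup : Measurable (Finset.univ.sup' Finset.univ_nonempty fun i (v : Fin d → RMax) => v i) :=
    Finset.measurable_sup' _ fun i _ => measurable_pi_apply i
  convert hsup using 1
  funext v
  rw [maxCoord, Finset.sup'_apply]

theorem measurable_minCoord : Measurable (minCoord : (Fin d → RMax) → RMax) := by
  have hinf : Measurable (Finset.univ.inf' Finset.univ_nonempty fun i (v : Fin d → RMax) => v i) :=
    Finset.inf'_induction _ _ (fun _ h₁ _ h₂ => h₁.inf h₂) fun i _ => measurable_pi_apply i
  convert hinf using 1
  funext v
  rw [minCoord, Finset.inf'_apply]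

theorem measurable_topGrowth (n : ℕ) : Measurable (topGrowth n : (ℤ → Mat d) → ℝ) :=
  (RMax.measurable_unbotD.comp (measurable_maxCoord.comp (measurable_prodZero 0 n))).indicator
    measurableSet_finiteRows

theorem measurable_botGrowth (n : ℕ) : Measurable (botGrowth n : (ℤ → Mat d) → ℝ) :=
  (RMax.measurable_unbotD.comp (measurable_minCoord.comp (measurable_prodZero 0 n))).indicator
    measurableSet_finiteRows

end Measurability

section Integrability

variable {Ω : Type*} [MeasurableSpace Ω] {μ : Measure Ω}

theorem integrableRMax_iff {X : Ω → RMax} :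
    IntegrableRMax X μ ↔ Integrable (fun ω => (X ω).unbotD 0) μ ∧ ∀ᵐ ω ∂μ, X ω ≠ ⊥ := by
  constructor
  · rintro ⟨f, hf, hX⟩
    refine ⟨hf.congr ?_, ?_⟩ <;> filter_upwards [hX] with ω hω <;> simp [hω]
  · rintro ⟨hint, hne⟩
    exact ⟨_, hint, hne.mono fun ω hω => (RMax.coe_unbotD hω).symm⟩

theorem integrableRMax_map_iff {α : Type*} [MeasurableSpace α] {X : Ω → α} (hX : Measurable X)
    {f : α → RMax} (hf : Measurable f) :
    IntegrableRMax f (μ.map X) ↔ IntegrableRMax (fun ω => f (X ω)) μ := by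
  rw [integrableRMax_iff, integrableRMax_iff]
  exact and_congr
    (integrable_map_measure (RMax.measurable_unbotD.comp hf).aestronglyMeasurable hX.aemeasurable)
    (ae_map_iff hX.aemeasurable (p := fun a => f a ≠ ⊥)
      (hf RMax.measurableSet_singleton_bot.compl))

theorem IntegrableRMax.sup {X Y : Ω → RMax} (hX : IntegrableRMax X μ) (hY : IntegrableRMax Y μ) :
    IntegrableRMax (X ⊔ Y) μ := by
  obtain ⟨f, hf, hXf⟩ := hX
  obtain ⟨g, hg, hYg⟩ := hY
  refine ⟨f ⊔ g, hf.sup hg, ?_⟩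
  filter_upwards [hXf, hYg] with ω hω hω'
  simp [hω, hω']

theorem IntegrableRMax.inf {X Y : Ω → RMax} (hX : IntegrableRMax X μ) (hY : IntegrableRMax Y μ) :
    IntegrableRMax (X ⊓ Y) μ := by
  obtain ⟨f, hf, hXf⟩ := hX
  obtain ⟨g, hg, hYg⟩ := hY
  refine ⟨f ⊓ g, hf.inf hg, ?_⟩
  filter_upwards [hXf, hYg] with ω hω hω'
  simp [hω, hω']

variable {d : ℕ} [NeZero d] {V : Ω → Fin d → RMax}

theorem IntegrableRMax.maxCoord (hV : ∀ i, IntegrableRMax (fun ω => V ω i) μ) :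
    IntegrableRMax (fun ω => maxCoord (V ω)) μ := by
  have hsup : IntegrableRMax (Finset.univ.sup' Finset.univ_nonempty fun i ω => V ω i) μ :=
    Finset.sup'_induction (p := fun X => IntegrableRMax X μ) _ _ (fun _ h₁ _ h₂ => h₁.sup h₂)
      fun i _ => hV i
  convert hsup using 1
  funext ω
  rw [MaxPlus.maxCoord, Finset.sup'_apply]

theorem IntegrableRMax.minCoord (hV : ∀ i, IntegrableRMax (fun ω => V ω i) μ) :
    IntegrableRMax (fun ω => minCoord (V ω)) μ := by
  have hinf : IntegrableRMax (Finset.univ.inf' Finset.univ_nonempty fun i ω => V ω i) μ :=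
    Finset.inf'_induction (p := fun X => IntegrableRMax X μ) _ _ (fun _ h₁ _ h₂ => h₁.inf h₂)
      fun i _ => hV i
  convert hinf using 1
  funext ω
  rw [MaxPlus.minCoord, Finset.inf'_apply]

variable {ν : Measure (ℤ → Mat d)}

theorem integrable_topGrowth_one (hint : ∀ i, IntegrableRMax (fun s => x s 1 i) ν) :
    Integrable (topGrowth 1) ν :=
  (integrableRMax_iff.1 (.maxCoord hint)).1.indicator measurableSet_finiteRows

theorem integrable_botGrowth_one (hint : ∀ i, IntegrableRMax (fun s => x s 1 i) ν) :
    Integrable (botGrowth 1) ν :=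
  (integrableRMax_iff.1 (.minCoord hint)).1.indicator measurableSet_finiteRows

end Integrability

section Paths

/-- The shift as a measurable equivalence. -/
def shiftEquiv (S : Type*) [MeasurableSpace S] : (ℤ → S) ≃ᵐ (ℤ → S) where
  toFun := shift
  invFun s n := s (n - 1)
  left_inv s := by funext n; simp [shift]
  right_inv s := by funext n; simp [shift]
  measurable_toFun := measurable_pi_lambda _ fun n => measurable_pi_apply (n + 1)
  measurable_invFun := measurable_pi_lambda _ fun n => measurable_pi_apply (n - 1)

theorem shiftEquiv_symm_iterate {S : Type*} [MeasurableSpace S] (s : ℤ → S) (n : ℕ) :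
    (shiftEquiv S).symm^[n] s = fun k => s (k + -n) := by
  induction n with
  | zero => simp
  | succ n ih =>
    rw [Function.iterate_succ_apply', ih]
    funext k
    change s (k - 1 + -n) = s (k + -(n + 1 : ℕ))
    congr 1
    lia

variable {d : ℕ}

theorem x_shiftEquiv_symm_iterate (s : ℤ → Mat d) (n : ℕ) :
    x ((shiftEquiv (Mat d)).symm^[n] s) n = y s n := by
  rw [shiftEquiv_symm_iterate, x, prodZero_translate, y, zero_add]

theorem tendsto_avg {u : ℕ → ℝ} {γ : ℝ} (hu : Tendsto (fun n : ℕ => u n / n) atTop (𝓝 γ)) :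
    Tendsto (fun n : ℕ => avg n (u n)) atTop (𝓝 (γ : EReal)) := by
  refine ((continuous_coe_real_ereal.tendsto γ).comp hu).congr fun n => ?_
  rw [avg, RMax.toEReal_coe, ← EReal.coe_mul, Function.comp_apply, div_eq_inv_mul, one_div]

variable [NeZero d] {s : ℤ → Mat d}

theorem coe_topGrowth_symm_iterate (hs : s ∈ finiteRows d) (n : ℕ) :
    (topGrowth n ((shiftEquiv (Mat d)).symm^[n] s) : RMax) = maxCoord (y s n) := by
  rw [coe_topGrowth, x_shiftEquiv_symm_iterate]
  rwa [shiftEquiv_symm_iterate, translate_mem_finiteRows_iff]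

theorem coe_botGrowth_symm_iterate (hs : s ∈ finiteRows d) (n : ℕ) :
    (botGrowth n ((shiftEquiv (Mat d)).symm^[n] s) : RMax) = minCoord (y s n) := by
  rw [coe_botGrowth, x_shiftEquiv_symm_iterate]
  rwa [shiftEquiv_symm_iterate, translate_mem_finiteRows_iff]

variable {ν : Measure (ℤ → Mat d)} [IsProbabilityMeasure ν]

theorem exists_ae_tendsto_avg_maxCoord (hν : Ergodic shift ν) (hrow : ∀ᵐ s ∂ν, s ∈ finiteRows d)
    (hint : ∀ i, IntegrableRMax (fun s => x s 1 i) ν) :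
    ∃ γ : ℝ, ∀ᵐ s ∂ν,
      Tendsto (fun n : ℕ => avg n (maxCoord (x s n))) atTop (𝓝 (γ : EReal)) ∧
      Tendsto (fun n : ℕ => avg n (maxCoord (y s n))) atTop (𝓝 (γ : EReal)) := by
  obtain ⟨γ, hγ⟩ := IsSubadditiveCocycle.exists_ae_tendsto_div_of_neg_le (e := shiftEquiv (Mat d))
    isSubadditiveCocycle_topGrowth isSubadditiveCocycle_neg_botGrowth hν
    (fun n => (measurable_topGrowth n).aestronglyMeasurable) (integrable_topGrowth_one hint)
    (integrable_botGrowth_one hint).neg fun n s => by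
      simpa only [neg_neg] using botGrowth_le_topGrowth n s
  refine ⟨γ, ?_⟩
  filter_upwards [hγ, hrow] with s hlim hs
  exact ⟨by simpa only [coe_topGrowth hs] using tendsto_avg hlim.1,
    by simpa only [coe_topGrowth_symm_iterate hs] using tendsto_avg hlim.2⟩

theorem exists_ae_tendsto_avg_minCoord (hν : Ergodic shift ν) (hrow : ∀ᵐ s ∂ν, s ∈ finiteRows d)
    (hint : ∀ i, IntegrableRMax (fun s => x s 1 i) ν) :
    ∃ γ : ℝ, ∀ᵐ s ∂ν,
      Tendsto (fun n : ℕ => avg n (minCoord (x s n))) atTop (𝓝 (γ : EReal)) ∧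
      Tendsto (fun n : ℕ => avg n (minCoord (y s n))) atTop (𝓝 (γ : EReal)) := by
  obtain ⟨γ, hγ⟩ := IsSubadditiveCocycle.exists_ae_tendsto_div_of_neg_le (e := shiftEquiv (Mat d))
    isSubadditiveCocycle_neg_botGrowth isSubadditiveCocycle_topGrowth hν
    (fun n => (measurable_botGrowth n).neg.aestronglyMeasurable)
    (integrable_botGrowth_one hint).neg (integrable_topGrowth_one hint)
    fun n s => neg_le_neg (botGrowth_le_topGrowth n s)
  refine ⟨-γ, ?_⟩
  filter_upwards [hγ, hrow] with s ⟨hx, hy⟩ hs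
  replace hx := hx.neg
  replace hy := hy.neg
  simp only [neg_div, neg_neg] at hx hy
  exact ⟨by simpa only [coe_botGrowth hs] using tendsto_avg hx,
    by simpa only [coe_botGrowth_symm_iterate hs] using tendsto_avg hy⟩

end Paths

end MaxPlus

open MaxPlus in
theorem vincent_top_bottom_exponents
    {d : ℕ} [NeZero d] {Ω : Type*} [MeasurableSpace Ω] (μ : Measure Ω) [IsProbabilityMeasure μ]
    (A : ℤ → Ω → MaxPlus.Mat d) (hA : ∀ n, Measurable (A n))
    (hstat : MaxPlus.StationaryErgodic A μ)
    (hrow : ∀ n, ∀ᵐ ω ∂μ, ∀ i, ∃ j, A n ω i j ≠ ⊥)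
    (hint : ∀ i, MaxPlus.IntegrableRMax (fun ω => MaxPlus.mulVec (A 0 ω) (fun _ => 0) i) μ) :
    ∃ γ γb : ℝ, ∀ᵐ ω ∂μ,
      Tendsto (fun n : ℕ => MaxPlus.avg n (MaxPlus.maxCoord (MaxPlus.x (fun k => A k ω) n)))
        atTop (𝓝 (γ : EReal)) ∧
      Tendsto (fun n : ℕ => MaxPlus.avg n (MaxPlus.maxCoord (MaxPlus.y (fun k => A k ω) n)))
        atTop (𝓝 (γ : EReal)) ∧
      Tendsto (fun n : ℕ => MaxPlus.avg n (MaxPlus.minCoord (MaxPlus.x (fun k => A k ω) n)))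
        atTop (𝓝 (γb : EReal)) ∧
      Tendsto (fun n : ℕ => MaxPlus.avg n (MaxPlus.minCoord (MaxPlus.y (fun k => A k ω) n)))
        atTop (𝓝 (γb : EReal)) := by
  have hX : Measurable fun ω n => A n ω := measurable_pi_lambda _ hA
  have := Measure.isProbabilityMeasure_map hX.aemeasurable (μ := μ)
  have hrow' : ∀ᵐ s ∂μ.map fun ω n => A n ω, s ∈ finiteRows d :=
    (ae_map_iff hX.aemeasurable measurableSet_finiteRows).2 (ae_all_iff.2 hrow)
  have hint' (i : Fin d) : IntegrableRMax (fun s => x s 1 i) (μ.map fun ω n => A n ω) := by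
    refine (integrableRMax_map_iff hX (f := fun s => x s 1 i)
      ((measurable_pi_apply i).comp (measurable_prodZero 0 1))).2 ?_
    simpa only [x_one] using hint i
  obtain ⟨γ, hγ⟩ := exists_ae_tendsto_avg_maxCoord hstat hrow' hint'
  obtain ⟨γb, hγb⟩ := exists_ae_tendsto_avg_minCoord hstat hrow' hint'
  refine ⟨γ, γb, ?_⟩
  filter_upwards [ae_of_ae_map hX.aemeasurable hγ, ae_of_ae_map hX.aemeasurable hγb]
    with ω htop hbot
  exact ⟨htop.1, htop.2, hbot.1, hbot.2⟩
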